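/- (Lemma 2, first part.) Under the construction setup, for each fixed 0 ≤ t_1 ≤ 2^s−1 the family S^{t_1} = {S^{(t_1,t_2)} : 0 ≤ t_2 ≤ 2^{k+1}−1} is a (2^{k+1}, 2^{k+1}, 2^m)-CCC; that is, writing s^{(t_1,t_2)}_ν (0 ≤ ν ≤ 2^{k+1}−1) for the sequences of S^{(t_1,t_2)} (indexed by (d,d_0,…,d_{k−1})), one has Σ_{ν=0}^{2^{k+1}−1} γ(s^{(t_1,t_2)}_ν, s^{(t_1,t_2')}_ν)(u) = 2^{m+k+1} if t_2 = t_2' and u = 0; = 0 if t_2 = t_2' and 0 < |u| < 2^m; and = 0 if t_2 ≠ t_2' and |u| < 2^m. -/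

import Mathlib

/-- Aperiodic cross-correlation function (ACCF) of two complex sequences of length `L`,
for an integer shift `u` with `−L < u ≤ L`:
`γ(a,b)(u) = Σ_{i=0}^{L−1−u} a_i · conj(b_{i+u})` for `0 ≤ u`, and
`γ(a,b)(u) = Σ_{i=0}^{L+u−1} a_{i−u} · conj(b_i)` for `u < 0`. -/
noncomputable def accf (L : ℕ) (a b : ℕ → ℂ) (u : ℤ) : ℂ :=
  if 0 ≤ u then ∑ i ∈ Finset.range (L - u.toNat), a i * (starRingEnd ℂ) (b (i + u.toNat))
  else ∑ i ∈ Finset.range (L - (-u).toNat), a (i + (-u).toNat) * (starRingEnd ℂ) (b i)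

/-- ACCF for a nonnegative shift `u : ℕ`. -/
noncomputable def accfN (L : ℕ) (a b : ℕ → ℂ) (u : ℕ) : ℂ :=
  ∑ i ∈ Finset.range (L - u), a i * (starRingEnd ℂ) (b (i + u))

/-- Periodic cross-correlation function of two sequences of length `N`. -/
noncomputable def pccf (N : ℕ) (x y : ℕ → ℂ) (u : ℕ) : ℂ :=
  ∑ n ∈ Finset.range N, x n * (starRingEnd ℂ) (y ((n + u) % N))

/-- The `t`-th bit of `x`, as an element of `ZMod q`. -/
def bitc (q : ℕ) (x t : ℕ) : ZMod q := if x.testBit t then 1 else 0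

/-- The `t`-th bit of `x`, as a natural number. -/
def bitn (x t : ℕ) : ℕ := if x.testBit t then 1 else 0

/-- `ω = exp(2π√−1/q)`. -/
noncomputable def omegaQ (q : ℕ) : ℂ := Complex.exp (2 * Real.pi * Complex.I / (q : ℂ))

/-- The construction setup of Lemma 2/Theorem 1: integers `0 ≤ s ≤ k ≤ m−2`, an even
integer `q ≥ 2`, index sets `J = {j_0,…,j_{k−1−s}} ⊆ {0,…,m−s−1}` and
`I = {i_0,…,i_{m−k−1}} = {0,…,m−s−1} \ J`, a permutation `π` of `{0,…,m−k−1}`,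
and a GBF `f : {0,1}^m → ℤ_q` (written as a function of the index `x < 2^m`) all of whose
restrictions over the variables `x_{j_0},…,x_{j_{k−s−1}}` are of the prescribed
path-plus-isolated-vertices quadratic form. -/
structure ZCZSetup where
  /-- the (even) alphabet size -/
  q : ℕ
  hq : 2 ≤ q
  hqeven : Even q
  m : ℕ
  k : ℕ
  s : ℕ
  hsk : s ≤ k
  hkm : k + 2 ≤ m
  /-- `jv β = j_β` for `β < k − s` (the non-forced part of `J`) -/
  jv : ℕ → ℕ
  /-- `iv β = i_β` for `β < m − k` (an enumeration of `I`) -/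
  iv : ℕ → ℕ
  /-- the permutation `π` of `{0,…,m−k−1}` -/
  perm : ℕ → ℕ
  hperm : Set.BijOn perm (Set.Iio (m - k)) (Set.Iio (m - k))
  hjv_lt : ∀ β < k - s, jv β < m - s
  hjv_inj : ∀ β₁ < k - s, ∀ β₂ < k - s, jv β₁ = jv β₂ → β₁ = β₂
  hiv_lt : ∀ β < m - k, iv β < m - s
  hiv_inj : ∀ β₁ < m - k, ∀ β₂ < m - k, iv β₁ = iv β₂ → β₁ = β₂
  hdisj : ∀ β₁ < k - s, ∀ β₂ < m - k, jv β₁ ≠ iv β₂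
  /-- the GBF `f`, as a function of the index `x` (with `j`-th bit `x_j`) -/
  f : ℕ → ZMod q
  hf : ∀ e : ℕ → Bool, ∃ u : ℕ → ZMod q, ∃ v' : ℕ → ZMod q, ∃ v : ZMod q,
    ∀ x < 2 ^ m, (∀ β < k - s, x.testBit (jv β) = e β) →
      f x = ((q / 2 : ℕ) : ZMod q) * (∑ β ∈ Finset.range (m - k - 1),
              bitc q x (iv (perm β)) * bitc q x (iv (perm (β + 1))))
          + (∑ β ∈ Finset.range (m - k), u β * bitc q x (iv β))
          + (∑ β ∈ Finset.range s, v' β * bitc q x (m - s + β)) + v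

namespace ZCZSetup

variable (C : ZCZSetup)

/-- The full tuple `(j_0,…,j_{k−1})`: `j_β = jv β` for `β < k − s` and
`j_{k−s+β} = m − s + β` for `0 ≤ β < s`. -/
def jfull (β : ℕ) : ℕ :=
  if β < C.k - C.s then C.jv β else C.m - C.s + (β - (C.k - C.s))

/-- The bits `b_0,…,b_{k+s+1}`: `t_2 = Σ_{β=0}^{k} b_β 2^β` and
`t_1 = Σ_{β=0}^{s−1} b_{k+1+β} 2^β`. -/
def bbit (t1 t2 β : ℕ) : ℕ :=
  if β < C.k + 1 then bitn t2 β else bitn t1 (β - (C.k + 1))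

/-- `γ_1 = i_{π(0)}`, an end vertex of the path. -/
def gamma1 : ℕ := C.iv (C.perm 0)

/-- `γ_2 = i_{π(m−k−1)}`, the other end vertex of the path. -/
def gamma2 : ℕ := C.iv (C.perm (C.m - C.k - 1))

/-- The GBF (as a function of the index `x`) of the `ν`-th sequence of `S^{(t_1,t_2)}`,
where `ν = d·2^k + Σ_{β=0}^{k−1} d_β 2^β` encodes `(d, d_0,…,d_{k−1})`. -/
def gExp (t1 t2 ν x : ℕ) : ZMod C.q :=
  C.f x + ((C.q / 2 : ℕ) : ZMod C.q) *
    ((∑ β ∈ Finset.range C.k, bitc C.q ν β * bitc C.q x (C.jfull β))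
     + bitc C.q ν C.k * bitc C.q x C.gamma1
     + (∑ β ∈ Finset.range C.k, ((C.bbit t1 t2 β : ℕ) : ZMod C.q) * bitc C.q x (C.jfull β))
     + (∑ β ∈ Finset.Ico (C.k - C.s) C.k,
          bitc C.q ν β * ((C.bbit t1 t2 (C.s + 1 + β) : ℕ) : ZMod C.q))
     + ((C.bbit t1 t2 C.k : ℕ) : ZMod C.q) * bitc C.q x C.gamma2)

/-- The `ν`-th sequence `s^{(t_1,t_2)}_ν` of `S^{(t_1,t_2)}` (a complex sequence of
length `2^m`). -/
noncomputable def Sseq (t1 t2 ν : ℕ) : ℕ → ℂ :=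
  fun x => omegaQ C.q ^ (C.gExp t1 t2 ν x).val

end ZCZSetup

/-!
Every cancellation comes from flipping one binary digit so that the exponent in `ℤ_q` changes by
`q / 2`, that is, the summand changes sign. Write the correlation as a sum over rows `ν` and over
pairs of positions `x`, `y = x + u`.

* If `x` and `y` differ at one of the variables `x_{j_0}, …, x_{j_{k-1}}, x_{γ₁}`, flipping the
  digit of `ν` that multiplies this variable cancels the rows.
* If they agree there but `x ≠ y`, they first differ at an inner vertex `i_{π(p+1)}` of the path.
  Flipping the preceding digit `i_{π(p)}` in both positions preserves `y - x`. The path form changes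
  by `q / 2` times the sum of the two neighbouring digits, and exactly one of these differs between
  `x` and `y`.
* If `x = y` and `t₂ ≠ t₂'` differ in the digit `β`, flipping the variable multiplied by `b_β`
  cancels the positions.
-/

section FlipBit

/-- The number obtained from `x` by flipping its binary digit of index `c`. -/
def flipBit (c x : ℕ) : ℕ := x ^^^ 2 ^ c

@[simp]
lemma flipBit_flipBit (c x : ℕ) : flipBit c (flipBit c x) = x :=
  Nat.xor_xor_cancel_right x (2 ^ c)

lemma flipBit_ne_self (c x : ℕ) : flipBit c x ≠ x := by
  simp [flipBit]

lemma flipBit_xor_flipBit (c x y : ℕ) : flipBit c x ^^^ flipBit c y = x ^^^ y := by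
  rw [flipBit, flipBit, Nat.xor_comm y, ← Nat.xor_assoc, Nat.xor_xor_cancel_right]

lemma flipBit_lt_two_pow {c n x : ℕ} (hc : c < n) (hx : x < 2 ^ n) : flipBit c x < 2 ^ n :=
  Nat.xor_lt_two_pow hx (Nat.pow_lt_pow_right one_lt_two hc)

lemma testBit_flipBit (c x r : ℕ) :
    (flipBit c x).testBit r = if r = c then !x.testBit r else x.testBit r := by
  rw [flipBit, Nat.testBit_xor, Nat.testBit_two_pow]
  split_ifs with h
  · simp [h]
  · simp [Ne.symm h]

lemma testBit_flipBit_of_ne {c r : ℕ} (h : r ≠ c) (x : ℕ) :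
    (flipBit c x).testBit r = x.testBit r := by
  rw [testBit_flipBit, if_neg h]

lemma testBit_flipBit_congr {x y r : ℕ} (h : x.testBit r = y.testBit r) (c : ℕ) :
    (flipBit c x).testBit r = (flipBit c y).testBit r := by
  rw [testBit_flipBit, testBit_flipBit, h]

lemma cast_flipBit (c x : ℕ) :
    (flipBit c x : ℤ) = x + if x.testBit c then -2 ^ c else 2 ^ c := by
  unfold flipBit
  induction c generalizing x with
  | zero =>
    have hdiv : (x ^^^ 1) / 2 = x / 2 := by simp [Nat.xor_div_two]
    have hmod : (x ^^^ 1) % 2 = (x + 1) % 2 := Nat.xor_mod_two_eq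
    simp only [pow_zero, Nat.testBit_zero, decide_eq_true_eq]
    split_ifs <;> omega
  | succ c ih =>
    have hdiv : (x ^^^ 2 ^ (c + 1)) / 2 = x / 2 ^^^ 2 ^ c := by
      rw [Nat.xor_div_two, pow_succ, Nat.mul_div_cancel _ two_pos]
    have hmod : (x ^^^ 2 ^ (c + 1)) % 2 = x % 2 := by
      rw [Nat.xor_mod_two_eq, pow_succ]
      omega
    have hhalf := ih (x / 2)
    rw [← hdiv] at hhalf
    rw [Nat.testBit_succ]
    generalize x ^^^ 2 ^ (c + 1) = z at hdiv hmod hhalf ⊢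
    split_ifs at hhalf ⊢ <;> push_cast [pow_succ] at hhalf ⊢ <;> omega

lemma cast_flipBit_eq_add {c x y : ℕ} {u : ℤ} (hxy : (y : ℤ) = x + u)
    (hc : x.testBit c = y.testBit c) : (flipBit c y : ℤ) = flipBit c x + u := by
  rw [cast_flipBit, cast_flipBit, hc, hxy]
  ring

lemma exists_lt_testBit_ne {n x y : ℕ} (hx : x < 2 ^ n) (hy : y < 2 ^ n) (hne : x ≠ y) :
    ∃ i < n, x.testBit i ≠ y.testBit i := by
  obtain ⟨i, hi⟩ := Nat.exists_testBit_ne_of_ne hne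
  refine ⟨i, not_le.mp fun hni => hi ?_, hi⟩
  have hpow : 2 ^ n ≤ 2 ^ i := Nat.pow_le_pow_right two_pos hni
  rw [Nat.testBit_lt_two_pow (hx.trans_le hpow), Nat.testBit_lt_two_pow (hy.trans_le hpow)]

lemma sum_range_two_pow_eq_zero_of_flipBit {M : Type*} [AddCommGroup M] {n c : ℕ} {F : ℕ → M}
    (hc : c < n) (hF : ∀ x < 2 ^ n, F (flipBit c x) = -F x) :
    ∑ x ∈ Finset.range (2 ^ n), F x = 0 := by
  refine Finset.sum_involution (fun x _ => flipBit c x) (fun x hx => ?_)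
    (fun x _ _ => flipBit_ne_self c x) (fun x hx => ?_) (fun x _ => flipBit_flipBit c x)
  · rw [hF x (Finset.mem_range.mp hx), add_neg_cancel]
  · exact Finset.mem_range.mpr (flipBit_lt_two_pow hc (Finset.mem_range.mp hx))

end FlipBit

section ShiftPairs

/-- The pairs of positions below `L` at distance `u`, over which the aperiodic correlation of two
sequences of length `L` at shift `u` is summed. -/
def shiftPairs (L : ℕ) (u : ℤ) : Finset (ℕ × ℕ) :=
  (Finset.range L ×ˢ Finset.range L).filter fun p => (p.2 : ℤ) = p.1 + u

lemma mem_shiftPairs {L : ℕ} {u : ℤ} {p : ℕ × ℕ} :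
    p ∈ shiftPairs L u ↔ p.1 < L ∧ p.2 < L ∧ (p.2 : ℤ) = p.1 + u := by
  simp only [shiftPairs, Finset.mem_filter, Finset.mem_product, Finset.mem_range, and_assoc]

lemma shiftPairs_zero (L : ℕ) : shiftPairs L 0 = (Finset.range L).diag := by
  ext ⟨x, y⟩
  simp only [mem_shiftPairs, Finset.mem_diag, Finset.mem_range]
  omega

lemma accf_eq_sum_shiftPairs (L : ℕ) (a b : ℕ → ℂ) (u : ℤ) :
    accf L a b u = ∑ p ∈ shiftPairs L u, a p.1 * (starRingEnd ℂ) (b p.2) := by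
  unfold accf
  split_ifs with hu
  · refine Finset.sum_nbij' (fun i => (i, i + u.toNat)) Prod.fst
      (fun i hi => ?_) (fun p hp => ?_) (fun _ _ => rfl) (fun p hp => ?_) (fun _ _ => rfl)
    · simp only [mem_shiftPairs, Finset.mem_range] at hi ⊢
      omega
    · simp only [mem_shiftPairs, Finset.mem_range] at hp ⊢
      omega
    · rw [mem_shiftPairs] at hp
      exact Prod.ext rfl (by simp only; omega)
  · refine Finset.sum_nbij' (fun i => (i + (-u).toNat, i)) Prod.snd
      (fun i hi => ?_) (fun p hp => ?_) (fun _ _ => rfl) (fun p hp => ?_) (fun _ _ => rfl)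
    · simp only [mem_shiftPairs, Finset.mem_range] at hi ⊢
      omega
    · simp only [mem_shiftPairs, Finset.mem_range] at hp ⊢
      omega
    · rw [mem_shiftPairs] at hp
      exact Prod.ext (by simp only; omega) rfl

/- The index `c (x ^^^ y)` of the flipped digit depends on `x ^^^ y` only, which the simultaneous
flip preserves; this makes the flip an involution. -/
lemma sum_shiftPairs_eq_zero_of_flipBit {M : Type*} [AddCommGroup M] {n : ℕ} {u : ℤ}
    {F : ℕ → ℕ → M} (c : ℕ → ℕ)
    (hF : ∀ x y, (x, y) ∈ shiftPairs (2 ^ n) u → F x y ≠ 0 →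
      c (x ^^^ y) < n ∧ x.testBit (c (x ^^^ y)) = y.testBit (c (x ^^^ y)) ∧
        F (flipBit (c (x ^^^ y)) x) (flipBit (c (x ^^^ y)) y) = -F x y) :
    ∑ p ∈ shiftPairs (2 ^ n) u, F p.1 p.2 = 0 := by
  classical
  rw [← Finset.sum_filter_ne_zero]
  refine Finset.sum_involution
    (fun p _ => (flipBit (c (p.1 ^^^ p.2)) p.1, flipBit (c (p.1 ^^^ p.2)) p.2)) ?_ ?_ ?_ ?_
  all_goals
    rintro ⟨x, y⟩ hp
    obtain ⟨hmem, hne⟩ := Finset.mem_filter.mp hp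
    obtain ⟨hc, hbit, hneg⟩ := hF x y hmem hne
  · rw [hneg, add_neg_cancel]
  · exact fun _ hfix => flipBit_ne_self _ x (congrArg Prod.fst hfix)
  · obtain ⟨hx, hy, hxy⟩ := mem_shiftPairs.mp hmem
    refine Finset.mem_filter.mpr ⟨mem_shiftPairs.mpr ?_, ?_⟩
    · exact ⟨flipBit_lt_two_pow hc hx, flipBit_lt_two_pow hc hy, cast_flipBit_eq_add hxy hbit⟩
    · rw [hneg]
      exact neg_ne_zero.mpr hne
  · simp only [flipBit_xor_flipBit, flipBit_flipBit]

end ShiftPairs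

section FirstDiff

variable {v : ℕ → ℕ} {x y : ℕ}

/-- Along the variables `v 0, v 1, …`, the digits of `x` and `y` differ for the first time at
`v n`. -/
def FirstDifferAt (v : ℕ → ℕ) (x y n : ℕ) : Prop :=
  x.testBit (v n) ≠ y.testBit (v n) ∧ ∀ r < n, x.testBit (v r) = y.testBit (v r)

/-- The least `r` such that the digit `v r` of `d` is set, and `0` if there is none. For
`d = x ^^^ y` it is the place along `v` where `x` and `y` first differ. -/
noncomputable def firstSetBit (v : ℕ → ℕ) (d : ℕ) : ℕ := sInf {r | d.testBit (v r)}

lemma testBit_xor_eq_true_iff {r : ℕ} :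
    (x ^^^ y).testBit r = true ↔ x.testBit r ≠ y.testBit r := by
  rw [Nat.testBit_xor, bne_iff_ne]

lemma firstSetBit_xor_le {r : ℕ} (h : x.testBit (v r) ≠ y.testBit (v r)) :
    firstSetBit v (x ^^^ y) ≤ r :=
  Nat.sInf_le (testBit_xor_eq_true_iff.mpr h)

lemma firstDifferAt_firstSetBit_xor {r : ℕ} (h : x.testBit (v r) ≠ y.testBit (v r)) :
    FirstDifferAt v x y (firstSetBit v (x ^^^ y)) := by
  have hmem : (x ^^^ y).testBit (v (firstSetBit v (x ^^^ y))) :=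
    Nat.sInf_mem (s := {r | (x ^^^ y).testBit (v r)}) ⟨r, testBit_xor_eq_true_iff.mpr h⟩
  refine ⟨testBit_xor_eq_true_iff.mp hmem, fun r' hr' => ?_⟩
  by_contra hne
  exact (firstSetBit_xor_le hne).not_gt hr'

end FirstDiff

section Forms

variable {q : ℕ}

/-- The element `q / 2` of `ℤ_q`; for even `q` it is the element of order two, and `ω ^ (q / 2)` is
`-1`. -/
def half (q : ℕ) : ZMod q := (q / 2 : ℕ)

lemma half_add_half (hq : Even q) : half q + half q = 0 := by
  rw [half, ← Nat.cast_add, ← two_mul, Nat.two_mul_div_two_of_even hq, ZMod.natCast_self]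

lemma stdAddChar_half [NeZero q] (hq : Even q) : ZMod.stdAddChar (half q) = -1 := by
  have hq0 : (q : ℂ) ≠ 0 := Nat.cast_ne_zero.mpr (NeZero.ne q)
  have hcast : ((q / 2 : ℕ) : ℂ) = q / 2 := Nat.cast_div hq.two_dvd two_ne_zero
  rw [half, ZMod.stdAddChar_apply, ZMod.toCircle_natCast, hcast, ← Complex.exp_pi_mul_I]
  congr 1
  field_simp

lemma stdAddChar_add_half [NeZero q] (hq : Even q) (a : ZMod q) :
    ZMod.stdAddChar (a + half q) = -ZMod.stdAddChar a := by
  rw [AddChar.map_add_eq_mul, stdAddChar_half hq, mul_neg_one]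

lemma omegaQ_pow_val [NeZero q] (a : ZMod q) : omegaQ q ^ a.val = ZMod.stdAddChar a := by
  rw [ZMod.stdAddChar_apply, ZMod.toCircle_apply, omegaQ, ← Complex.exp_nat_mul]
  congr 1
  ring

lemma bitc_congr {x y r r' : ℕ} (h : x.testBit r = y.testBit r') : bitc q x r = bitc q y r' := by
  rw [bitc, bitc, h]

lemma bitc_flipBit_self (x c : ℕ) : bitc q (flipBit c x) c = 1 - bitc q x c := by
  rw [bitc, bitc, testBit_flipBit, if_pos rfl]
  cases x.testBit c <;> simp

lemma bitc_flipBit_of_ne {r c : ℕ} (h : r ≠ c) (x : ℕ) :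
    bitc q (flipBit c x) r = bitc q x r :=
  bitc_congr (testBit_flipBit_of_ne h x)

lemma half_mul_bitc_sub_of_ne (hq : Even q) {x y r r' : ℕ} (h : x.testBit r ≠ y.testBit r') :
    half q * (bitc q x r - bitc q y r') = half q := by
  rw [bitc, bitc, Bool.eq_not.mpr h]
  cases y.testBit r' with
  | false => simp
  | true => simpa using neg_eq_of_add_eq_zero_left (half_add_half hq)

/-- The linear form `∑_{β < n} a_β x_{v β}` in the digits of `x`. -/
def bitForm (q n : ℕ) (a : ℕ → ZMod q) (v : ℕ → ℕ) (x : ℕ) : ZMod q :=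
  ∑ β ∈ Finset.range n, a β * bitc q x (v β)

lemma half_mul_bitForm_flipBit (hq : Even q) {n r : ℕ} {v : ℕ → ℕ}
    (hv : Set.InjOn v (Set.Iio n)) (hr : r < n) (a : ℕ → ZMod q) (x : ℕ) :
    half q * bitForm q n a v (flipBit (v r) x) = half q * (bitForm q n a v x + a r) := by
  have hterm : ∀ β ∈ Finset.range n, half q * (a β * bitc q (flipBit (v r) x) (v β)) =
      half q * (a β * bitc q x (v β) + if β = r then a β else 0) := by
    intro β hβ
    by_cases h : β = r
    · subst h
      rw [bitc_flipBit_self, if_pos rfl]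
      linear_combination (-a β * bitc q x (v β)) * half_add_half hq
    · have hvβ : v β ≠ v r := fun h' => h (hv (Finset.mem_range.mp hβ) hr h')
      rw [bitc_flipBit_of_ne hvβ, if_neg h, add_zero]
  rw [bitForm, bitForm, Finset.mul_sum, Finset.sum_congr rfl hterm, ← Finset.mul_sum,
    Finset.sum_add_distrib, Finset.sum_ite_eq', if_pos (Finset.mem_range.mpr hr)]

lemma bitForm_flipBit_of_forall_ne {n c : ℕ} {v : ℕ → ℕ} (hv : ∀ β < n, v β ≠ c)
    (a : ℕ → ZMod q) (x : ℕ) : bitForm q n a v (flipBit c x) = bitForm q n a v x :=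
  Finset.sum_congr rfl fun β hβ => by rw [bitc_flipBit_of_ne (hv β (Finset.mem_range.mp hβ))]

lemma bitForm_flipBit_sub {x y c : ℕ} (hc : x.testBit c = y.testBit c) (n : ℕ)
    (a : ℕ → ZMod q) (v : ℕ → ℕ) :
    bitForm q n a v (flipBit c x) - bitForm q n a v (flipBit c y) =
      bitForm q n a v x - bitForm q n a v y := by
  simp only [bitForm, ← Finset.sum_sub_distrib, ← mul_sub]
  refine Finset.sum_congr rfl fun β _ => ?_
  by_cases h : v β = c
  · rw [h, bitc_congr hc, bitc_congr (testBit_flipBit_congr hc c), sub_self, sub_self]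
  · rw [bitc_flipBit_of_ne h, bitc_flipBit_of_ne h]

/-- The quadratic form `∑_{β < n} x_{v β} x_{v (β + 1)}` of the path `v 0, v 1, …, v n`. -/
def pathForm (q n : ℕ) (v : ℕ → ℕ) (x : ℕ) : ZMod q :=
  ∑ β ∈ Finset.range n, bitc q x (v β) * bitc q x (v (β + 1))

lemma half_mul_pathForm_flipBit (hq : Even q) {n p : ℕ} {v : ℕ → ℕ}
    (hv : Set.InjOn v (Set.Iic n)) (hp : p < n) (x : ℕ) :
    half q * pathForm q n v (flipBit (v p) x) = half q * (pathForm q n v x + bitc q x (v (p + 1))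
      + if p = 0 then 0 else bitc q x (v (p - 1))) := by
  have hne : ∀ β ≤ n, β ≠ p → v β ≠ v p := fun β hβ h h' => h (hv hβ hp.le h')
  have hterm : ∀ β ∈ Finset.range n,
      half q * (bitc q (flipBit (v p) x) (v β) * bitc q (flipBit (v p) x) (v (β + 1))) =
        half q * (bitc q x (v β) * bitc q x (v (β + 1))
          + (if β = p then bitc q x (v (β + 1)) else 0)
          + if β + 1 = p then bitc q x (v β) else 0) := by
    intro β hβ
    have hβ := Finset.mem_range.mp hβ
    rcases eq_or_ne β p with rfl | hβp
    · rw [bitc_flipBit_self, bitc_flipBit_of_ne (hne (β + 1) hβ (by omega)), if_pos rfl,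
        if_neg (by omega)]
      linear_combination (-bitc q x (v β) * bitc q x (v (β + 1))) * half_add_half hq
    rw [bitc_flipBit_of_ne (hne β hβ.le hβp), if_neg hβp]
    rcases eq_or_ne (β + 1) p with rfl | hβp'
    · rw [bitc_flipBit_self, if_pos rfl]
      linear_combination (-bitc q x (v β) * bitc q x (v (β + 1))) * half_add_half hq
    · rw [bitc_flipBit_of_ne (hne (β + 1) hβ hβp'), if_neg hβp', add_zero, add_zero]
  have hprev : ∑ β ∈ Finset.range n, (if β + 1 = p then bitc q x (v β) else 0) =
      if p = 0 then 0 else bitc q x (v (p - 1)) := by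
    cases p with
    | zero => simp
    | succ p => simp [(Nat.lt_succ_self p).trans hp]
  rw [pathForm, pathForm, Finset.mul_sum, Finset.sum_congr rfl hterm, ← Finset.mul_sum,
    Finset.sum_add_distrib, Finset.sum_add_distrib, hprev, Finset.sum_ite_eq',
    if_pos (Finset.mem_range.mpr hp)]

lemma FirstDifferAt.half_mul_pathForm_flipBit_sub (hq : Even q) {n p x y : ℕ} {v : ℕ → ℕ}
    (h : FirstDifferAt v x y (p + 1)) (hv : Set.InjOn v (Set.Iic n)) (hp : p < n) :
    half q * (pathForm q n v (flipBit (v p) x) - pathForm q n v (flipBit (v p) y)) =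
      half q * (pathForm q n v x - pathForm q n v y) + half q := by
  have hprev : bitc q x (v (p - 1)) = bitc q y (v (p - 1)) := bitc_congr (h.2 _ (by omega))
  rw [mul_sub, half_mul_pathForm_flipBit hq hv hp, half_mul_pathForm_flipBit hq hv hp, hprev]
  linear_combination half_mul_bitc_sub_of_ne hq h.1

end Forms

namespace ZCZSetup

section Variables

variable (C : ZCZSetup)

/-- The `r`-th vertex `i_{π(r)}` of the path. -/
def pathVertex (r : ℕ) : ℕ := C.iv (C.perm r)

/-- The variable multiplied by the `β`-th digit of the row index `ν`: `j_β` for `β < k`, and `γ_1`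
for `β = k`. -/
def rowVertex (β : ℕ) : ℕ := if β < C.k then C.jfull β else C.pathVertex 0

/-- The variable multiplied by the `β`-th digit of `t_2`: `j_β` for `β < k`, and `γ_2` for
`β = k`. -/
def setVertex (β : ℕ) : ℕ := if β < C.k then C.jfull β else C.pathVertex (C.m - C.k - 1)

lemma perm_lt {r : ℕ} (hr : r < C.m - C.k) : C.perm r < C.m - C.k := C.hperm.mapsTo hr

lemma pathVertex_lt_sub {r : ℕ} (hr : r < C.m - C.k) : C.pathVertex r < C.m - C.s :=
  C.hiv_lt _ (C.perm_lt hr)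

lemma pathVertex_lt {r : ℕ} (hr : r < C.m - C.k) : C.pathVertex r < C.m :=
  (C.pathVertex_lt_sub hr).trans_le (Nat.sub_le C.m C.s)

lemma pathVertex_injOn : Set.InjOn C.pathVertex (Set.Iio (C.m - C.k)) :=
  fun _ h₁ _ h₂ h => C.hperm.injOn h₁ h₂ (C.hiv_inj _ (C.perm_lt h₁) _ (C.perm_lt h₂) h)

lemma jfull_of_lt {β : ℕ} (hβ : β < C.k - C.s) : C.jfull β = C.jv β := if_pos hβ

lemma jfull_lt {β : ℕ} (hβ : β < C.k) : C.jfull β < C.m := by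
  have := C.hsk
  have := C.hkm
  unfold jfull
  split_ifs with h
  · have := C.hjv_lt β h
    omega
  · omega

lemma jfull_injOn : Set.InjOn C.jfull (Set.Iio C.k) := by
  intro β₁ h₁ β₂ h₂ h
  simp only [Set.mem_Iio] at h₁ h₂
  unfold jfull at h
  split_ifs at h with c₁ c₂ c₂
  · exact C.hjv_inj _ c₁ _ c₂ h
  · have := C.hjv_lt _ c₁
    omega
  · have := C.hjv_lt _ c₂
    omega
  · omega

lemma jfull_ne_pathVertex (β : ℕ) {r : ℕ} (hr : r < C.m - C.k) :
    C.jfull β ≠ C.pathVertex r := by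
  unfold jfull
  split_ifs with h
  · exact C.hdisj β h _ (C.perm_lt hr)
  · have := C.pathVertex_lt_sub hr
    omega

lemma setVertex_lt (β : ℕ) : C.setVertex β < C.m := by
  have := C.hkm
  unfold setVertex
  split_ifs with h
  · exact C.jfull_lt h
  · exact C.pathVertex_lt (by omega)

lemma setVertex_injOn : Set.InjOn C.setVertex (Set.Iio (C.k + 1)) := by
  have hlast : C.m - C.k - 1 < C.m - C.k := by
    have := C.hkm
    omega
  intro β₁ h₁ β₂ h₂ h
  simp only [Set.mem_Iio] at h₁ h₂
  unfold setVertex at h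
  split_ifs at h with c₁ c₂ c₂
  · exact C.jfull_injOn c₁ c₂ h
  · exact absurd h (C.jfull_ne_pathVertex β₁ hlast)
  · exact absurd h.symm (C.jfull_ne_pathVertex β₂ hlast)
  · omega

lemma setVertex_ne_pathVertex (β : ℕ) {r : ℕ} (hr : r + 1 < C.m - C.k) :
    C.setVertex β ≠ C.pathVertex r := by
  unfold setVertex
  split_ifs with h
  · exact C.jfull_ne_pathVertex β (by omega)
  · intro h'
    have := C.pathVertex_injOn (Set.mem_Iio.mpr (by omega)) (Set.mem_Iio.mpr (by omega)) h'
    omega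

lemma image_jfull_union_image_pathVertex :
    (Finset.range C.k).image C.jfull ∪ (Finset.range (C.m - C.k)).image C.pathVertex =
      Finset.range C.m := by
  have hdisj : Disjoint ((Finset.range C.k).image C.jfull)
      ((Finset.range (C.m - C.k)).image C.pathVertex) := by
    simp only [Finset.disjoint_left, Finset.mem_image, Finset.mem_range]
    rintro _ ⟨β, -, rfl⟩ ⟨r, hr, h⟩
    exact C.jfull_ne_pathVertex β hr h.symm
  refine Finset.eq_of_subset_of_card_le (Finset.union_subset ?_ ?_) ?_
  · exact Finset.image_subset_iff.mpr fun β hβ =>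
      Finset.mem_range.mpr (C.jfull_lt (Finset.mem_range.mp hβ))
  · exact Finset.image_subset_iff.mpr fun r hr =>
      Finset.mem_range.mpr (C.pathVertex_lt (Finset.mem_range.mp hr))
  · rw [Finset.card_union_of_disjoint hdisj,
      Finset.card_image_of_injOn (by simpa only [Finset.coe_range] using C.jfull_injOn),
      Finset.card_image_of_injOn (by simpa only [Finset.coe_range] using C.pathVertex_injOn)]
    simp only [Finset.card_range]
    omega

lemma exists_jfull_or_pathVertex_eq {i : ℕ} (hi : i < C.m) :
    (∃ β < C.k, C.jfull β = i) ∨ ∃ r < C.m - C.k, C.pathVertex r = i := by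
  simpa only [← image_jfull_union_image_pathVertex, Finset.mem_union, Finset.mem_image,
    Finset.mem_range] using Finset.mem_range.mpr hi

end Variables

section RowAgree

/-- `x` and `y` have the same digits at all the variables `j_0, …, j_{k-1}, γ_1` that occur with a
digit of the row index. -/
def RowAgree (C : ZCZSetup) (x y : ℕ) : Prop :=
  ∀ β < C.k + 1, x.testBit (C.rowVertex β) = y.testBit (C.rowVertex β)

variable {C : ZCZSetup} {x y : ℕ}

lemma RowAgree.testBit_jfull (h : C.RowAgree x y) {β : ℕ} (hβ : β < C.k) :
    x.testBit (C.jfull β) = y.testBit (C.jfull β) := by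
  simpa only [rowVertex, if_pos hβ] using h β (by omega)

lemma RowAgree.testBit_pathVertex_zero (h : C.RowAgree x y) :
    x.testBit (C.pathVertex 0) = y.testBit (C.pathVertex 0) := by
  simpa only [rowVertex, lt_irrefl, if_false] using h C.k (by omega)

lemma RowAgree.map_flipBit (h : C.RowAgree x y) (c : ℕ) :
    C.RowAgree (flipBit c x) (flipBit c y) :=
  fun β hβ => testBit_flipBit_congr (h β hβ) c

lemma RowAgree.exists_firstDifferAt (h : C.RowAgree x y) (hx : x < 2 ^ C.m) (hy : y < 2 ^ C.m)
    (hne : x ≠ y) :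
    ∃ p, firstSetBit C.pathVertex (x ^^^ y) = p + 1 ∧ p + 1 < C.m - C.k ∧
      FirstDifferAt C.pathVertex x y (p + 1) := by
  obtain ⟨i, hi, hbit⟩ := exists_lt_testBit_ne hx hy hne
  obtain ⟨β, hβ, rfl⟩ | ⟨r, hr, rfl⟩ := C.exists_jfull_or_pathVertex_eq hi
  · exact absurd (h.testBit_jfull hβ) hbit
  have hfirst := firstDifferAt_firstSetBit_xor hbit
  have hle := firstSetBit_xor_le hbit
  generalize firstSetBit C.pathVertex (x ^^^ y) = n at hfirst hle
  cases n with
  | zero => exact absurd h.testBit_pathVertex_zero hfirst.1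
  | succ p => exact ⟨p, rfl, hle.trans_lt hr, hfirst⟩

end RowAgree

section Exponent

variable {C : ZCZSetup}

lemma exists_f_eq (C : ZCZSetup) (e : ℕ → Bool) :
    ∃ (a b : ℕ → ZMod C.q) (v : ZMod C.q), ∀ x < 2 ^ C.m,
      (∀ β < C.k - C.s, x.testBit (C.jfull β) = e β) →
        C.f x = half C.q * pathForm C.q (C.m - C.k - 1) C.pathVertex x
          + bitForm C.q (C.m - C.k) a C.iv x + bitForm C.q C.s b (C.m - C.s + ·) x + v := by
  obtain ⟨a, b, v, hf⟩ := C.hf e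
  exact ⟨a, b, v, fun x hx he => hf x hx fun β hβ => C.jfull_of_lt hβ ▸ he β hβ⟩

lemma RowAgree.f_flipBit_sub {x y p : ℕ} (h : C.RowAgree x y) (hx : x < 2 ^ C.m)
    (hy : y < 2 ^ C.m) (hp : p + 1 < C.m - C.k)
    (hfirst : FirstDifferAt C.pathVertex x y (p + 1)) :
    C.f (flipBit (C.pathVertex p) x) - C.f (flipBit (C.pathVertex p) y) =
      C.f x - C.f y + half C.q := by
  have hc : C.pathVertex p < C.m := C.pathVertex_lt (by omega)
  have hcommon : x.testBit (C.pathVertex p) = y.testBit (C.pathVertex p) :=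
    hfirst.2 p (Nat.lt_succ_self p)
  have hflip : ∀ z β, (flipBit (C.pathVertex p) z).testBit (C.jfull β) = z.testBit (C.jfull β) :=
    fun z β => testBit_flipBit_of_ne (C.jfull_ne_pathVertex β (by omega)) z
  have hyx : ∀ β < C.k - C.s, y.testBit (C.jfull β) = x.testBit (C.jfull β) :=
    fun β hβ => (h.testBit_jfull (by omega)).symm
  obtain ⟨a, b, v, hf⟩ := C.exists_f_eq fun β => x.testBit (C.jfull β)
  rw [hf _ (flipBit_lt_two_pow hc hx) fun β _ => hflip x β,
    hf _ (flipBit_lt_two_pow hc hy) fun β hβ => (hflip y β).trans (hyx β hβ),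
    hf x hx fun _ _ => rfl, hf y hy hyx]
  have hinj : Set.InjOn C.pathVertex (Set.Iic (C.m - C.k - 1)) :=
    C.pathVertex_injOn.mono fun r hr => Set.mem_Iio.mpr (by have := Set.mem_Iic.mp hr; omega)
  linear_combination hfirst.half_mul_pathForm_flipBit_sub C.hqeven hinj (by omega)
    + bitForm_flipBit_sub hcommon (C.m - C.k) a C.iv
    + bitForm_flipBit_sub hcommon C.s b (C.m - C.s + ·)

variable (C)

/-- The bilinear form `∑_{β < k} d_β x_{j_β} + d x_{γ_1}` in the digits of the row index `ν` and of
the position `x`, written as a linear form in the digits of `ν`. -/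
def rowForm (ν x : ℕ) : ZMod C.q :=
  bitForm C.q (C.k + 1) (fun β => bitc C.q x (C.rowVertex β)) id ν

/-- The bilinear form `∑_{β < k} b_β x_{j_β} + b_k x_{γ_2}` in the digits of `t = t_2` and of the
position `x`, written as a linear form in the digits of `x`. -/
def setForm (t x : ℕ) : ZMod C.q := bitForm C.q (C.k + 1) (bitc C.q t) C.setVertex x

lemma half_mul_rowForm_flipBit {β : ℕ} (hβ : β < C.k + 1) (ν x : ℕ) :
    half C.q * C.rowForm (flipBit β ν) x =
      half C.q * (C.rowForm ν x + bitc C.q x (C.rowVertex β)) :=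
  half_mul_bitForm_flipBit C.hqeven (Set.injOn_id _) hβ _ ν

lemma half_mul_setForm_flipBit {β : ℕ} (hβ : β < C.k + 1) (t x : ℕ) :
    half C.q * C.setForm t (flipBit (C.setVertex β) x) =
      half C.q * (C.setForm t x + bitc C.q t β) :=
  half_mul_bitForm_flipBit C.hqeven C.setVertex_injOn hβ _ x

lemma setForm_flipBit_pathVertex {p : ℕ} (hp : p + 1 < C.m - C.k) (t x : ℕ) :
    C.setForm t (flipBit (C.pathVertex p) x) = C.setForm t x :=
  bitForm_flipBit_of_forall_ne (fun β _ => C.setVertex_ne_pathVertex β hp) _ x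

variable {C} in
lemma RowAgree.rowForm_eq {x y : ℕ} (h : C.RowAgree x y) (ν : ℕ) :
    C.rowForm ν x = C.rowForm ν y := by
  simp only [rowForm, bitForm]
  refine Finset.sum_congr rfl fun β hβ => ?_
  rw [bitc_congr (h β (Finset.mem_range.mp hβ))]

lemma rowForm_eq_sum_add (ν x : ℕ) :
    C.rowForm ν x = ∑ β ∈ Finset.range C.k, bitc C.q ν β * bitc C.q x (C.jfull β)
      + bitc C.q ν C.k * bitc C.q x C.gamma1 := by
  rw [rowForm, bitForm, Finset.sum_range_succ]
  refine congrArg₂ _ (Finset.sum_congr rfl fun β hβ => ?_) ?_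
  · rw [rowVertex, if_pos (Finset.mem_range.mp hβ), id, mul_comm]
  · rw [rowVertex, if_neg (lt_irrefl _), id, mul_comm, pathVertex, gamma1]

lemma cast_bbit_of_lt (t1 t2 : ℕ) {β : ℕ} (hβ : β < C.k + 1) :
    ((C.bbit t1 t2 β : ℕ) : ZMod C.q) = bitc C.q t2 β := by
  rw [bbit, if_pos hβ, bitn, bitc]
  split_ifs <;> simp

lemma setForm_eq_sum_add (t1 t2 x : ℕ) :
    C.setForm t2 x =
      ∑ β ∈ Finset.range C.k, ((C.bbit t1 t2 β : ℕ) : ZMod C.q) * bitc C.q x (C.jfull β)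
        + ((C.bbit t1 t2 C.k : ℕ) : ZMod C.q) * bitc C.q x C.gamma2 := by
  rw [setForm, bitForm, Finset.sum_range_succ]
  refine congrArg₂ _ (Finset.sum_congr rfl fun β hβ => ?_) ?_
  · have hβ := Finset.mem_range.mp hβ
    rw [setVertex, if_pos hβ, C.cast_bbit_of_lt t1 t2 (by omega)]
  · rw [setVertex, if_neg (lt_irrefl _), C.cast_bbit_of_lt t1 t2 (by omega), pathVertex, gamma2]

lemma gExp_sub_gExp (t1 t2 t2' ν x y : ℕ) :
    C.gExp t1 t2 ν x - C.gExp t1 t2' ν y = C.f x - C.f y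
      + half C.q * (C.rowForm ν x - C.rowForm ν y)
      + half C.q * (C.setForm t2 x - C.setForm t2' y) := by
  have hoffset : ∑ β ∈ Finset.Ico (C.k - C.s) C.k,
        bitc C.q ν β * ((C.bbit t1 t2 (C.s + 1 + β) : ℕ) : ZMod C.q) =
      ∑ β ∈ Finset.Ico (C.k - C.s) C.k,
        bitc C.q ν β * ((C.bbit t1 t2' (C.s + 1 + β) : ℕ) : ZMod C.q) := by
    refine Finset.sum_congr rfl fun β hβ => ?_
    have hβ := Finset.mem_Ico.mp hβ
    rw [bbit, bbit, if_neg (by omega), if_neg (by omega)]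
  rw [gExp, gExp, hoffset, ← half, rowForm_eq_sum_add, rowForm_eq_sum_add,
    C.setForm_eq_sum_add t1, C.setForm_eq_sum_add t1]
  ring

end Exponent

section RowCorr

variable (C : ZCZSetup) (t1 t2 t2' : ℕ)

/-- The contribution of the pair of positions `x`, `y` to the correlation of `S^{(t_1,t_2)}` and
`S^{(t_1,t_2')}`, summed over all rows. -/
noncomputable def rowCorr (x y : ℕ) : ℂ :=
  ∑ ν ∈ Finset.range (2 ^ (C.k + 1)),
    C.Sseq t1 t2 ν x * (starRingEnd ℂ) (C.Sseq t1 t2' ν y)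

lemma sum_accf_Sseq_eq_sum_rowCorr (L : ℕ) (u : ℤ) :
    ∑ ν ∈ Finset.range (2 ^ (C.k + 1)), accf L (C.Sseq t1 t2 ν) (C.Sseq t1 t2' ν) u =
      ∑ p ∈ shiftPairs L u, C.rowCorr t1 t2 t2' p.1 p.2 := by
  simp only [accf_eq_sum_shiftPairs, rowCorr]
  exact Finset.sum_comm

instance : NeZero C.q := ⟨(two_pos.trans_le C.hq).ne'⟩

lemma rowCorr_eq_sum_stdAddChar (x y : ℕ) :
    C.rowCorr t1 t2 t2' x y = ∑ ν ∈ Finset.range (2 ^ (C.k + 1)),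
      ZMod.stdAddChar (C.gExp t1 t2 ν x - C.gExp t1 t2' ν y) := by
  refine Finset.sum_congr rfl fun ν _ => ?_
  rw [Sseq, Sseq, omegaQ_pow_val, omegaQ_pow_val, ← AddChar.map_neg_eq_conj,
    ← AddChar.map_add_eq_mul, sub_eq_add_neg]

lemma rowCorr_self (x : ℕ) : C.rowCorr t1 t2 t2 x x = 2 ^ (C.k + 1) := by
  simp [rowCorr_eq_sum_stdAddChar]

variable {t1 t2 t2'}

lemma rowCorr_eq_neg_of_gExp_sub {x y x' y' : ℕ}
    (h : ∀ ν, C.gExp t1 t2 ν x' - C.gExp t1 t2' ν y' =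
      C.gExp t1 t2 ν x - C.gExp t1 t2' ν y + half C.q) :
    C.rowCorr t1 t2 t2' x' y' = -C.rowCorr t1 t2 t2' x y := by
  simp only [rowCorr_eq_sum_stdAddChar, h, stdAddChar_add_half C.hqeven, Finset.sum_neg_distrib]

lemma rowAgree_of_rowCorr_ne_zero {x y : ℕ} (h : C.rowCorr t1 t2 t2' x y ≠ 0) :
    C.RowAgree x y := by
  intro β hβ
  by_contra hne
  refine h ?_
  rw [rowCorr_eq_sum_stdAddChar]
  refine sum_range_two_pow_eq_zero_of_flipBit hβ fun ν _ => ?_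
  rw [← stdAddChar_add_half C.hqeven, gExp_sub_gExp, gExp_sub_gExp]
  congr 1
  linear_combination C.half_mul_rowForm_flipBit hβ ν x - C.half_mul_rowForm_flipBit hβ ν y
    + half_mul_bitc_sub_of_ne C.hqeven hne

lemma rowCorr_flipBit_setVertex {β : ℕ} (hβ : β < C.k + 1)
    (hne : t2.testBit β ≠ t2'.testBit β) (x : ℕ) :
    C.rowCorr t1 t2 t2' (flipBit (C.setVertex β) x) (flipBit (C.setVertex β) x) =
      -C.rowCorr t1 t2 t2' x x := by
  refine C.rowCorr_eq_neg_of_gExp_sub fun ν => ?_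
  rw [gExp_sub_gExp, gExp_sub_gExp]
  linear_combination C.half_mul_setForm_flipBit hβ t2 x - C.half_mul_setForm_flipBit hβ t2' x
    + half_mul_bitc_sub_of_ne C.hqeven hne

variable {C} in
lemma RowAgree.rowCorr_flipBit_pathVertex {x y p : ℕ} (h : C.RowAgree x y) (hx : x < 2 ^ C.m)
    (hy : y < 2 ^ C.m) (hp : p + 1 < C.m - C.k)
    (hfirst : FirstDifferAt C.pathVertex x y (p + 1)) :
    C.rowCorr t1 t2 t2' (flipBit (C.pathVertex p) x) (flipBit (C.pathVertex p) y) =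
      -C.rowCorr t1 t2 t2' x y := by
  refine C.rowCorr_eq_neg_of_gExp_sub fun ν => ?_
  rw [gExp_sub_gExp, gExp_sub_gExp, h.rowForm_eq, (h.map_flipBit _).rowForm_eq,
    C.setForm_flipBit_pathVertex hp, C.setForm_flipBit_pathVertex hp,
    h.f_flipBit_sub hx hy hp hfirst]
  ring

variable (t1)

lemma sum_rowCorr_self (t2 : ℕ) :
    ∑ p ∈ shiftPairs (2 ^ C.m) 0, C.rowCorr t1 t2 t2 p.1 p.2 = 2 ^ (C.m + C.k + 1) := by
  simp only [shiftPairs_zero, Finset.sum_diag, rowCorr_self, Finset.sum_const, Finset.card_range,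
    nsmul_eq_mul, Nat.cast_pow, Nat.cast_ofNat, ← pow_add, add_assoc]

lemma sum_rowCorr_zero_of_ne (ht2 : t2 < 2 ^ (C.k + 1)) (ht2' : t2' < 2 ^ (C.k + 1))
    (hne : t2 ≠ t2') :
    ∑ p ∈ shiftPairs (2 ^ C.m) 0, C.rowCorr t1 t2 t2' p.1 p.2 = 0 := by
  obtain ⟨β, hβ, hbit⟩ := exists_lt_testBit_ne ht2 ht2' hne
  rw [shiftPairs_zero, Finset.sum_diag]
  exact sum_range_two_pow_eq_zero_of_flipBit (C.setVertex_lt β) fun x _ =>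
    C.rowCorr_flipBit_setVertex hβ hbit x

lemma sum_rowCorr_of_ne_zero (t2 t2' : ℕ) {u : ℤ} (hu : u ≠ 0) :
    ∑ p ∈ shiftPairs (2 ^ C.m) u, C.rowCorr t1 t2 t2' p.1 p.2 = 0 := by
  refine sum_shiftPairs_eq_zero_of_flipBit (F := C.rowCorr t1 t2 t2')
    (fun d => C.pathVertex (firstSetBit C.pathVertex d - 1)) fun x y hmem hne => ?_
  obtain ⟨hx, hy, hxy⟩ := mem_shiftPairs.mp hmem
  have hagree := C.rowAgree_of_rowCorr_ne_zero hne
  obtain ⟨p, hfirst_eq, hp, hfirst⟩ := hagree.exists_firstDifferAt hx hy (by omega)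
  simp only [hfirst_eq, Nat.add_sub_cancel]
  exact ⟨C.pathVertex_lt (by omega), hfirst.2 p (Nat.lt_succ_self p),
    hagree.rowCorr_flipBit_pathVertex hx hy hp hfirst⟩

end RowCorr

end ZCZSetup

/-- **Lemma 2, first part.** For each fixed `0 ≤ t_1 ≤ 2^s − 1`, the family
`S^{t_1} = {S^{(t_1,t_2)} : 0 ≤ t_2 ≤ 2^{k+1} − 1}` is a `(2^{k+1}, 2^{k+1}, 2^m)`-CCC:
the row-wise ACCF sum equals `2^{m+k+1}` when `t_2 = t_2'` and `u = 0`, and `0` for all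
other shifts `|u| < 2^m` (same or different `t_2`). -/
theorem lemma2_first_part (C : ZCZSetup) (t1 : ℕ) (ht1 : t1 < 2 ^ C.s)
    (t2 t2' : ℕ) (ht2 : t2 < 2 ^ (C.k + 1)) (ht2' : t2' < 2 ^ (C.k + 1))
    (u : ℤ) (hu : u.natAbs < 2 ^ C.m) :
    (∑ ν ∈ Finset.range (2 ^ (C.k + 1)),
        accf (2 ^ C.m) (C.Sseq t1 t2 ν) (C.Sseq t1 t2' ν) u) =
      if t2 = t2' ∧ u = 0 then ((2 : ℂ) ^ (C.m + C.k + 1)) else 0 := by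
  rw [C.sum_accf_Sseq_eq_sum_rowCorr]
  split_ifs with h
  · obtain ⟨rfl, rfl⟩ := h
    exact C.sum_rowCorr_self t1 t2
  · rcases eq_or_ne u 0 with rfl | hu0
    · exact C.sum_rowCorr_zero_of_ne t1 ht2 ht2' fun ht => h ⟨ht, rfl⟩
    · exact C.sum_rowCorr_of_ne_zero t1 t2 t2' hu0
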